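/- For every integer $p \geq 1$, the sum formula $\zeta(p+1) = \zeta(2,\underbrace{1,\ldots,1}_{p-1})$ holds, i.e. $\sum_{m=1}^\infty \frac{1}{m^{p+1}} = \sum_{s_p > s_{p-1} > \cdots > s_1 > 0} \frac{1}{s_p^2\, s_{p-1}\cdots s_1}$. -/

import Mathlib

/-!
The proof is the connected sum method of Seki and Yamamoto. The connector
`C(m, n) = m! n! / (m + n)!` is symmetric, equals `1` when `m = 0`, and satisfies the transport
relation `∑_{a > m} a⁻¹ C(a, n) = n⁻¹ C(m, n)` for `n > 0`, a telescoping sum. Splitting off the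
smallest entry, induction on `p` gives
`∑_{m < s₁ < ⋯ < s_p} C(s_p, n) / (s₁ ⋯ s_p) = n⁻ᵖ C(m, n)`. Take `m = 0` and sum this against
`n⁻¹` over `n > 0`: the right-hand side becomes `ζ(p + 1)`, and on the left, summing over `n` first,
the transport relation in the other variable turns `∑_n n⁻¹ C(s_p, n)` into `s_p⁻¹`.
-/

open Filter Topology

namespace ZetaSumFormula

lemma hasSum_sigma_of_nonneg {β : Type*} {γ : β → Type*} {f : (Σ b, γ b) → ℝ} {g : β → ℝ} {a : ℝ}
    (hf : ∀ x, 0 ≤ f x) (hfg : ∀ b, HasSum (fun c ↦ f ⟨b, c⟩) (g b)) (hg : HasSum g a) :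
    HasSum f a := by
  refine hg.sigma_of_hasSum hfg
    ((summable_sigma_of_nonneg hf).2 ⟨fun b ↦ (hfg b).summable, ?_⟩)
  simpa only [(hfg _).tsum_eq] using hg.summable

lemma hasSum_comm_of_nonneg {β γ : Type*} {f : β → γ → ℝ} {g : β → ℝ} {h : γ → ℝ} {a : ℝ}
    (hf : ∀ b c, 0 ≤ f b c) (hfg : ∀ b, HasSum (f b) (g b)) (hfh : ∀ c, HasSum (f · c) (h c))
    (hg : HasSum g a) : HasSum h a := by
  have hsigma : HasSum (fun x : Σ _ : β, γ ↦ f x.1 x.2) a :=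
    hasSum_sigma_of_nonneg (fun x ↦ hf x.1 x.2) hfg hg
  exact HasSum.prod_fiberwise (f := fun x : γ × β ↦ f x.2 x.1)
    (((Equiv.sigmaEquivProd β γ).trans (Equiv.prodComm β γ)).hasSum_iff.1 hsigma) hfh

lemma hasSum_sub_succ_of_antitone {f : ℕ → ℝ} {l : ℝ} (hf : Antitone f)
    (hl : Tendsto f atTop (𝓝 l)) : HasSum (fun k ↦ f k - f (k + 1)) (f 0 - l) := by
  rw [hasSum_iff_tendsto_nat_of_nonneg fun k ↦ sub_nonneg.2 (hf k.le_succ)]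
  simpa only [Finset.sum_range_sub'] using hl.const_sub (f 0)

/-- The enumeration `k ↦ m + k + 1` of the natural numbers above `m`, used to turn sums over
`Set.Ioi m` into series. -/
@[simps]
def natEquivIoi (m : ℕ) : ℕ ≃ Set.Ioi m where
  toFun k := ⟨m + k + 1, by grind⟩
  invFun a := a - (m + 1)
  left_inv k := by grind
  right_inv a := by grind

/-- The connector `m! n! / (m + n)!` of Seki and Yamamoto, written as the inverse of a binomial
coefficient. -/
noncomputable def connector (m n : ℕ) : ℝ := ((m + n).choose n : ℝ)⁻¹

lemma connector_nonneg (m n : ℕ) : 0 ≤ connector m n := by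
  unfold connector; positivity

lemma connector_comm (m n : ℕ) : connector m n = connector n m := by
  rw [connector, connector, add_comm n m, Nat.choose_symm_add]

lemma connector_zero_left (n : ℕ) : connector 0 n = 1 := by
  simp [connector]

lemma connector_antitone_left (n : ℕ) : Antitone (connector · n) := fun m m' h ↦
  inv_anti₀ (by exact_mod_cast Nat.choose_pos (Nat.le_add_left n m))
    (by exact_mod_cast Nat.choose_le_choose n (Nat.add_le_add_right h n))

lemma connector_le_one (m n : ℕ) : connector m n ≤ 1 :=
  (connector_antitone_left n m.zero_le).trans_eq (connector_zero_left n)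

lemma connector_one_right (m : ℕ) : connector m 1 = 1 / ((m : ℝ) + 1) := by
  simp [connector]

lemma tendsto_connector_atTop {n : ℕ} (hn : 0 < n) :
    Tendsto (connector · n) atTop (𝓝 0) := by
  refine squeeze_zero (fun m ↦ connector_nonneg m n) (fun m ↦ ?_)
    tendsto_one_div_add_atTop_nhds_zero_nat
  calc connector m n = connector n m := connector_comm m n
    _ ≤ connector 1 m := connector_antitone_left m hn
    _ = 1 / ((m : ℝ) + 1) := by rw [connector_comm, connector_one_right]

lemma add_add_one_mul_connector_succ (m n : ℕ) :
    (m + n + 1) * connector (m + 1) n = (m + 1) * connector m n := by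
  have hchoose : ((m + n).choose n : ℝ) * (m + n + 1) = (m + 1 + n).choose n * (m + 1) := by
    have h := Nat.choose_mul_succ_eq (m + n) n
    rw [show m + n + 1 - n = m + 1 by omega, show m + n + 1 = m + 1 + n by omega] at h
    rw [add_right_comm (m : ℝ)]
    exact_mod_cast h
  have hpos (k : ℕ) : (0 : ℝ) < (k + n).choose n :=
    Nat.cast_pos.2 (Nat.choose_pos (Nat.le_add_left n k))
  have hpos_left := hpos m
  have hpos_succ := hpos (m + 1)
  unfold connector
  field_simp
  linarith

lemma inv_mul_connector_succ {n : ℕ} (hn : 0 < n) (m : ℕ) :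
    ((m + 1 : ℕ) : ℝ)⁻¹ * connector (m + 1) n =
      (n : ℝ)⁻¹ * connector m n - (n : ℝ)⁻¹ * connector (m + 1) n := by
  have hsucc := add_add_one_mul_connector_succ m n
  push_cast
  field_simp
  linarith

lemma hasSum_inv_mul_connector {n : ℕ} (hn : 0 < n) (m : ℕ) :
    HasSum (fun a : Set.Ioi m ↦ (a : ℝ)⁻¹ * connector a n) ((n : ℝ)⁻¹ * connector m n) := by
  have hanti : Antitone fun k ↦ (n : ℝ)⁻¹ * connector (m + k) n := fun k k' h ↦
    mul_le_mul_of_nonneg_left (connector_antitone_left n (Nat.add_le_add_left h m)) (by positivity)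
  have hlim : Tendsto (fun k ↦ (n : ℝ)⁻¹ * connector (m + k) n) atTop (𝓝 0) := by
    simpa [add_comm m] using
      ((tendsto_connector_atTop hn).comp (tendsto_add_atTop_nat m)).const_mul (n : ℝ)⁻¹
  rw [← (natEquivIoi m).hasSum_iff]
  simpa [← add_assoc, ← inv_mul_connector_succ hn, Function.comp_def] using
    hasSum_sub_succ_of_antitone hanti hlim

/-- The tuples `m < s₁ < ⋯ < s_p` of natural numbers, over which the multiple zeta values (for
`m = 0`) and their tails are summed. -/
abbrev IncreasingTuple (m p : ℕ) : Type := {s : Fin p → ℕ // StrictMono s ∧ ∀ i, m < s i}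

namespace IncreasingTuple

/-- The largest entry `s_p` of an increasing tuple, with the convention `s₀ = m` for the empty
tuple. -/
def last {m p : ℕ} (s : IncreasingTuple m p) : ℕ := (Fin.cons m s.1 : Fin (p + 1) → ℕ) (Fin.last p)

lemma last_eq_apply_last {m p : ℕ} (s : IncreasingTuple m (p + 1)) : s.last = s.1 (Fin.last p) :=
  rfl

lemma lt_last {m p : ℕ} (s : IncreasingTuple m (p + 1)) : m < s.last :=
  s.2.2 (Fin.last p)

lemma strictMono_cons_and_forall_lt_iff {α : Type*} [Preorder α] {m a : α} {p : ℕ} {t : Fin p → α} :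
    (StrictMono (Fin.cons a t : Fin (p + 1) → α) ∧
        ∀ i, m < (Fin.cons a t : Fin (p + 1) → α) i) ↔
      m < a ∧ StrictMono t ∧ ∀ i, a < t i := by
  rw [Fin.strictMono_cons, Fin.forall_fin_succ]
  simp only [Fin.cons_zero, Fin.cons_succ]
  exact ⟨fun ⟨⟨hat, ht⟩, hma, _⟩ ↦ ⟨hma, ht, hat⟩,
    fun ⟨hma, ht, hat⟩ ↦ ⟨⟨hat, ht⟩, hma, fun i ↦ hma.trans (hat i)⟩⟩

/-- The decomposition of a nonempty increasing tuple into its smallest entry `a` and an increasing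
tuple of entries above `a`, on which the induction on the length rests. -/
def consEquiv (m p : ℕ) : (Σ a : Set.Ioi m, IncreasingTuple a p) ≃ IncreasingTuple m (p + 1) where
  toFun x := ⟨Fin.cons x.1.1 x.2.1, strictMono_cons_and_forall_lt_iff.2 ⟨x.1.2, x.2.2⟩⟩
  invFun s :=
    have h := strictMono_cons_and_forall_lt_iff.1 (by rw [Fin.cons_self_tail]; exact s.2)
    ⟨⟨s.1 0, h.1⟩, ⟨Fin.tail s.1, h.2⟩⟩
  left_inv _ := rfl
  right_inv s := Subtype.ext (Fin.cons_self_tail s.1)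

lemma last_consEquiv {m p : ℕ} (a : Set.Ioi m) (t : IncreasingTuple a p) :
    (consEquiv m p ⟨a, t⟩).last = t.last :=
  rfl

lemma prod_consEquiv {M : Type*} [CommMonoid M] {m p : ℕ} (f : ℕ → M) (a : Set.Ioi m)
    (t : IncreasingTuple a p) :
    ∏ i, f ((consEquiv m p ⟨a, t⟩).1 i) = f a * ∏ i, f (t.1 i) :=
  Fin.prod_univ_succ _

end IncreasingTuple

lemma hasSum_prod_inv_mul_connector {n : ℕ} (hn : 0 < n) (p m : ℕ) :
    HasSum (fun s : IncreasingTuple m p ↦ (∏ i, (s.1 i : ℝ)⁻¹) * connector s.last n)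
      ((n : ℝ)⁻¹ ^ p * connector m n) := by
  induction p generalizing m with
  | zero =>
    have : Unique (IncreasingTuple m 0) :=
      Unique.mk' _ (h₁ := ⟨⟨Fin.elim0, by simp [Subsingleton.strictMono]⟩⟩)
    simp [IncreasingTuple.last]
  | succ p ih =>
    have hinner (a : Set.Ioi m) :
        HasSum (fun t : IncreasingTuple a p ↦
            (a : ℝ)⁻¹ * ((∏ i, (t.1 i : ℝ)⁻¹) * connector t.last n))
          ((n : ℝ)⁻¹ ^ p * ((a : ℝ)⁻¹ * connector a n)) := by
      rw [mul_left_comm]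
      exact (ih a).mul_left _
    have houter : HasSum (fun a : Set.Ioi m ↦ (n : ℝ)⁻¹ ^ p * ((a : ℝ)⁻¹ * connector a n))
        ((n : ℝ)⁻¹ ^ (p + 1) * connector m n) := by
      rw [pow_succ, mul_assoc]
      exact (hasSum_inv_mul_connector hn m).mul_left _
    rw [← (IncreasingTuple.consEquiv m p).hasSum_iff]
    refine hasSum_sigma_of_nonneg
      (fun x ↦ mul_nonneg (by positivity) (connector_nonneg _ n)) (fun a ↦ ?_) houter
    simpa only [Function.comp_apply, IncreasingTuple.last_consEquiv,
      IncreasingTuple.prod_consEquiv fun k : ℕ ↦ (k : ℝ)⁻¹, mul_assoc] using hinner a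

lemma summable_inv_pow_mul_connector {q : ℕ} (hq : 1 < q) (m : ℕ) :
    Summable fun n : ℕ ↦ (n : ℝ)⁻¹ ^ q * connector m n := by
  have hzeta : Summable fun n : ℕ ↦ (n : ℝ)⁻¹ ^ q := by
    simpa only [inv_pow] using Real.summable_nat_pow_inv.2 hq
  exact hzeta.of_nonneg_of_le
    (fun n ↦ mul_nonneg (by positivity) (connector_nonneg m n))
    fun n ↦ mul_le_of_le_one_right (by positivity) (connector_le_one m n)

theorem hasSum_prod_inv_mul_inv_last_mul_connector (p m k : ℕ) :
    HasSum (fun s : IncreasingTuple m (p + 1) ↦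
        (∏ i, (s.1 i : ℝ)⁻¹) * ((s.last : ℝ)⁻¹ * connector s.last k))
      (∑' n : Set.Ioi k, (n : ℝ)⁻¹ ^ (p + 2) * connector m n) := by
  refine hasSum_comm_of_nonneg
    (f := fun (n : Set.Ioi k) (s : IncreasingTuple m (p + 1)) ↦
      (∏ i, (s.1 i : ℝ)⁻¹) * ((n : ℝ)⁻¹ * connector s.last n))
    (fun n s ↦ ?_) (fun n ↦ ?_) (fun s ↦ ?_)
    ((summable_inv_pow_mul_connector (by omega) m).subtype (Set.Ioi k)).hasSum
  · have hconn := connector_nonneg s.last n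
    positivity
  · have h := (hasSum_prod_inv_mul_connector (Nat.zero_lt_of_lt n.2) (p + 1) m).mul_left (n : ℝ)⁻¹
    rw [← mul_assoc, ← pow_succ'] at h
    simpa only [Function.comp_apply, mul_left_comm (n : ℝ)⁻¹] using h
  · have hs : 0 < s.last := Nat.zero_lt_of_lt s.lt_last
    simpa only [connector_comm s.last] using
      (hasSum_inv_mul_connector hs k).mul_left (∏ i, (s.1 i : ℝ)⁻¹)

end ZetaSumFormula

open ZetaSumFormula in
/-- The sum formula `ζ(p+1) = ζ(2,1,…,1)` (with `p-1` ones). -/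
theorem zeta_sum_formula (p : ℕ) (hp : 1 ≤ p) :
    ∑' m : ℕ, (1 : ℝ) / ((m + 1 : ℕ) : ℝ) ^ (p + 1) =
      ∑' s : {s : Fin p → ℕ // StrictMono s ∧ ∀ i, 0 < s i},
        (1 / ((s.1 ⟨p - 1, by omega⟩ : ℕ) : ℝ)) * ∏ i : Fin p, (1 : ℝ) / (s.1 i : ℝ) := by
  obtain ⟨p, rfl⟩ := Nat.exists_eq_add_of_le' hp
  calc ∑' m : ℕ, (1 : ℝ) / ((m + 1 : ℕ) : ℝ) ^ (p + 2)
      = ∑' n : Set.Ioi 0, (n : ℝ)⁻¹ ^ (p + 2) * connector 0 n := by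
        rw [← (natEquivIoi 0).tsum_eq]
        simp [connector_zero_left]
    _ = ∑' s : IncreasingTuple 0 (p + 1),
          (∏ i, (s.1 i : ℝ)⁻¹) * ((s.last : ℝ)⁻¹ * connector s.last 0) :=
        (hasSum_prod_inv_mul_inv_last_mul_connector p 0 0).tsum_eq.symm
    _ = _ := tsum_congr fun s ↦ by
        rw [connector_comm, connector_zero_left, mul_one, mul_comm, s.last_eq_apply_last]
        simp only [one_div]
        rfl
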